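/- Let S' be a sign string of length n whose k-th entry is −, and let S be the sign string of length n+1 obtained from S' by replacing this entry by two consecutive entries +,+. If x ∈ V^{S'} has property P, then (id^{⊗(k−1)} ⊗ t^{++}_- ⊗ id^{⊗(n−k)})(x) ∈ V^S has property P. The same holds with the roles of + and − exchanged, using t^{--}_+ in place of t^{++}_-. -/

import Mathlib

/-!
In coordinates, the coefficient of `e_L` in the image, where `L = P ++ a :: b :: R` and `P` has
length `k`, is a sum over `c` with at most one nonzero term (`applyYpp_cases`). It is either zero,
or `v⁻¹` times a coefficient of `x` (hence without constant term), or, when `(a, b)` is one of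
`(1, 0)`, `(1, -1)`, `(0, -1)`, equal to the coefficient of `x` at `P ++ c :: R` with `c = 1, 0, -1`
respectively. Thus integrality is inherited, and since `c` determines `(a, b)` (`YPat.inj`), two
strings whose coefficients have nonzero constant term come from the same string for `x` and
coincide. The two maps `t^{++}_-` and `t^{--}_+` have the same matrix, so one case suffices.
-/

noncomputable section

/-- The ground field `K = ℚ(v)`. -/
abbrev K : Type := RatFunc ℚ

/-- The indeterminate `v`. -/
def v : K := RatFunc.X

/-- The three states `-1, 0, 1`. -/
inductive St where
  | neg : St
  | zero : St
  | pos : St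
deriving DecidableEq

instance : Fintype St where
  elems := {St.neg, St.zero, St.pos}
  complete := fun x => by cases x <;> simp

/-- The integer value of a state. -/
def stval : St → ℤ
  | .neg => -1
  | .zero => 0
  | .pos => 1

/-- The order `-1 < 0 < 1` on states. -/
def stLt (a b : St) : Prop := stval a < stval b

/-- The weight `μ(s, j) ∈ ℤ²`; `true` is the sign `+`, `false` is `-`. -/
def wt : Bool → St → ℤ × ℤ
  | true, .pos => (1, 0)
  | true, .zero => (-1, 1)
  | true, .neg => (0, -1)
  | false, .pos => (0, 1)
  | false, .zero => (1, -1)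
  | false, .neg => (-1, 0)

/-- Total weight `Σ μ(s_k, j_k)` of a sign string and a state string. -/
def wtSum (S : List Bool) (J : List St) : ℤ × ℤ :=
  ((S.zip J).map fun p => wt p.1 p.2).sum

/-- A state string is dominant if its lattice path stays in the dominant
Weyl chamber and returns to the origin. -/
def Dominant (S : List Bool) (J : List St) : Prop :=
  J.length = S.length ∧
  (∀ k : ℕ, 0 ≤ (wtSum (S.take k) (J.take k)).1 ∧ 0 ≤ (wtSum (S.take k) (J.take k)).2) ∧
  wtSum S J = 0

/-- Coefficients of `b^{+-}(1) ∈ V⁺ ⊗ V⁻`. -/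
def bCpm : St → St → K
  | .pos, .neg => 1
  | .zero, .zero => v⁻¹
  | .neg, .pos => v⁻¹ ^ 2
  | _, _ => 0

/-- Coefficients of `b^{-+}(1) ∈ V⁻ ⊗ V⁺`. -/
def bCmp : St → St → K
  | .pos, .neg => 1
  | .zero, .zero => v⁻¹
  | .neg, .pos => v⁻¹ ^ 2
  | _, _ => 0

/-- Matrix entries of `σ_{+-} : V⁺ ⊗ V⁻ → K`. -/
def sCpm : St → St → K
  | .neg, .pos => 1
  | .zero, .zero => v
  | .pos, .neg => v ^ 2
  | _, _ => 0

/-- Matrix entries of `σ_{-+} : V⁻ ⊗ V⁺ → K`. -/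
def sCmp : St → St → K
  | .neg, .pos => 1
  | .zero, .zero => v
  | .pos, .neg => v ^ 2
  | _, _ => 0

/-- `tYpp a b c` is the coefficient of `e_a ⊗ e_b` in `t^{++}_-(e_c)`. -/
def tYpp : St → St → St → K
  | .pos, .zero, .pos => 1
  | .zero, .pos, .pos => v⁻¹
  | .pos, .neg, .zero => 1
  | .neg, .pos, .zero => v⁻¹
  | .zero, .neg, .neg => 1
  | .neg, .zero, .neg => v⁻¹
  | _, _, _ => 0

/-- `tYmm a b c` is the coefficient of `e_a ⊗ e_b` in `t^{--}_+(e_c)`. -/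
def tYmm : St → St → St → K
  | .pos, .zero, .pos => 1
  | .zero, .pos, .pos => v⁻¹
  | .pos, .neg, .zero => 1
  | .neg, .pos, .zero => v⁻¹
  | .zero, .neg, .neg => 1
  | .neg, .zero, .neg => v⁻¹
  | _, _, _ => 0

/-- `tLpp a b c` is the coefficient of `e_c` in `t^-_{++}(e_a ⊗ e_b)`. -/
def tLpp : St → St → St → K
  | .pos, .zero, .pos => v
  | .zero, .pos, .pos => 1
  | .pos, .neg, .zero => v
  | .neg, .pos, .zero => 1
  | .zero, .neg, .neg => v
  | .neg, .zero, .neg => 1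
  | _, _, _ => 0

/-- `tLmm a b c` is the coefficient of `e_c` in `t^+_{--}(e_a ⊗ e_b)`. -/
def tLmm : St → St → St → K
  | .pos, .zero, .pos => v
  | .zero, .pos, .pos => 1
  | .pos, .neg, .zero => v
  | .neg, .pos, .zero => 1
  | .zero, .neg, .neg => v
  | .neg, .zero, .neg => 1
  | _, _, _ => 0

/-- Matrix entries of the H-map
`(id_{V⁺} ⊗ t^-_{++}) ∘ (t^{++}_- ⊗ id_{V⁺}) : V⁻ ⊗ V⁺ → V⁺ ⊗ V⁻`:
`HCpm a b c d` is the coefficient of `e_a ⊗ e_b` in the image of `e_c ⊗ e_d`. -/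
def HCpm (a b c d : St) : K := ∑ y : St, tYpp a y c * tLpp y d b

/-- Matrix entries of the H-map
`(t^-_{++} ⊗ id_{V⁺}) ∘ (id_{V⁺} ⊗ t^{++}_-) : V⁺ ⊗ V⁻ → V⁻ ⊗ V⁺`:
`HCmp a b c d` is the coefficient of `e_a ⊗ e_b` in the image of `e_c ⊗ e_d`. -/
def HCmp (a b c d : St) : K := ∑ x : St, tLpp c x a * tYpp x b d

/-- State patterns of the three H-rules: `(j_k, j_{k+1})` on top, the
replacement below. -/
inductive HPat : St → St → St → St → Prop where
  | h1 : HPat .pos .zero .zero .pos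
  | h2 : HPat .zero .zero .neg .pos
  | h3 : HPat .zero .neg .neg .zero

/-- State patterns of the three Y-rules. -/
inductive YPat : St → St → St → Prop where
  | y1 : YPat .pos .zero .pos
  | y2 : YPat .pos .neg .zero
  | y3 : YPat .zero .neg .neg

/-- One application of a growth rule, rewriting `(S, J)` to `(S', J')`. -/
inductive Step : List Bool → List St → List Bool → List St → Prop where
  | hstep (A B : List Bool) (P Q : List St) (s1 s2 : Bool) (j1 j2 j1' j2' : St)
      (hl : A.length = P.length) (hs : s1 ≠ s2) (hp : HPat j1 j2 j1' j2') :
      Step (A ++ s1 :: s2 :: B) (P ++ j1 :: j2 :: Q)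
        (A ++ (!s1) :: (!s2) :: B) (P ++ j1' :: j2' :: Q)
  | ustep (A B : List Bool) (P Q : List St) (s1 s2 : Bool)
      (hl : A.length = P.length) (hs : s1 ≠ s2) :
      Step (A ++ s1 :: s2 :: B) (P ++ St.pos :: St.neg :: Q) (A ++ B) (P ++ Q)
  | ystep (A B : List Bool) (P Q : List St) (s : Bool) (j1 j2 j' : St)
      (hl : A.length = P.length) (hp : YPat j1 j2 j') :
      Step (A ++ s :: s :: B) (P ++ j1 :: j2 :: Q) (A ++ (!s) :: B) (P ++ j' :: Q)

/-- A complete execution of the growth algorithm from `(S, J)` down to the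
pair of empty strings. -/
inductive Exec : List Bool → List St → Type where
  | nil : Exec [] []
  | hstep (A B : List Bool) (P Q : List St) (s1 s2 : Bool) (j1 j2 j1' j2' : St)
      (hl : A.length = P.length) (hs : s1 ≠ s2) (hp : HPat j1 j2 j1' j2')
      (e : Exec (A ++ (!s1) :: (!s2) :: B) (P ++ j1' :: j2' :: Q)) :
      Exec (A ++ s1 :: s2 :: B) (P ++ j1 :: j2 :: Q)
  | ustep (A B : List Bool) (P Q : List St) (s1 s2 : Bool)
      (hl : A.length = P.length) (hs : s1 ≠ s2)
      (e : Exec (A ++ B) (P ++ Q)) :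
      Exec (A ++ s1 :: s2 :: B) (P ++ St.pos :: St.neg :: Q)
  | ystep (A B : List Bool) (P Q : List St) (s : Bool) (j1 j2 j' : St)
      (hl : A.length = P.length) (hp : YPat j1 j2 j')
      (e : Exec (A ++ (!s) :: B) (P ++ j' :: Q)) :
      Exec (A ++ s :: s :: B) (P ++ j1 :: j2 :: Q)

/-- The web tensor of an execution, as coordinates with respect to the basis
`e^S_J` of `V^S`: `web e L` is the coefficient of `e^S_L`. -/
def web : {S : List Bool} → {J : List St} → Exec S J → List St → K
  | _, _, .nil, L => if L = [] then 1 else 0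
  | _, _, .hstep A _ _ _ s1 _ _ _ _ _ _ _ _ e, L =>
      match L.drop A.length with
      | a :: b :: R =>
          ∑ c : St, ∑ d : St,
            (if s1 then HCpm a b c d else HCmp a b c d) *
              web e (L.take A.length ++ c :: d :: R)
      | _ => 0
  | _, _, .ustep A _ _ _ s1 _ _ _ e, L =>
      match L.drop A.length with
      | a :: b :: R => (if s1 then bCpm a b else bCmp a b) * web e (L.take A.length ++ R)
      | _ => 0
  | _, _, .ystep A _ _ _ s _ _ _ _ _ e, L =>
      match L.drop A.length with
      | a :: b :: R =>
          ∑ c : St, (if s then tYpp a b c else tYmm a b c) * web e (L.take A.length ++ c :: R)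
      | _ => 0

/-- `c ∈ v⁻¹ ℤ[v⁻¹]`: a polynomial in `v⁻¹` with zero constant term. -/
def ZeroConst (c : K) : Prop :=
  ∃ p : Polynomial ℤ, p.coeff 0 = 0 ∧ c = Polynomial.aeval v⁻¹ p

/-- `x` has the negative-exponent property relative to a state string `J`
(`n` is the length of the ambient sign string). -/
def NegExpProp (n : ℕ) (x : List St → K) (J : List St) : Prop :=
  x J = 1 ∧ ∀ J' : List St, J'.length = n → J' ≠ J → ZeroConst (x J')

/-- `c ∈ ℕ[v, v⁻¹]`: a Laurent polynomial with nonnegative integer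
coefficients. -/
def IsNatLaurent (c : K) : Prop :=
  ∃ (p : Polynomial ℕ) (m : ℕ), c = v⁻¹ ^ m * Polynomial.aeval v p

/-- `c ∈ ℤ[v⁻¹]`. -/
def InZInv (c : K) : Prop := ∃ p : Polynomial ℤ, c = Polynomial.aeval v⁻¹ p

/-- Property P: all coefficients lie in `ℤ[v⁻¹]` and at most one of them has a
nonzero constant term. -/
def PropP (n : ℕ) (x : List St → K) : Prop :=
  (∀ J : List St, J.length = n → InZInv (x J)) ∧
  ∀ J1 J2 : List St, J1.length = n → J2.length = n →
    ¬ ZeroConst (x J1) → ¬ ZeroConst (x J2) → J1 = J2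

/-- The sign string `(+,+,−,−,+,+,−,−,+,+,−,−)`. -/
def base : List Bool :=
  [true, true, false, false, true, true, false, false, true, true, false, false]


/-- Applying `t^{++}_-` at position `k` (0-indexed), in coordinates. -/
def applyYpp (k : ℕ) (x : List St → K) : List St → K := fun L =>
  match L.drop k with
  | a :: b :: R => ∑ c : St, tYpp a b c * x (L.take k ++ c :: R)
  | _ => 0

/-- Applying `t^{--}_+` at position `k` (0-indexed), in coordinates. -/
def applyYmm (k : ℕ) (x : List St → K) : List St → K := fun L =>
  match L.drop k with
  | a :: b :: R => ∑ c : St, tYmm a b c * x (L.take k ++ c :: R)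
  | _ => 0

lemma ZeroConst.inZInv {c : K} (h : ZeroConst c) : InZInv c :=
  let ⟨p, _, hp⟩ := h
  ⟨p, hp⟩

lemma zeroConst_zero : ZeroConst 0 := ⟨0, by simp, by simp⟩

lemma InZInv.zeroConst_mul {c : K} (h : InZInv c) : ZeroConst (v⁻¹ * c) := by
  obtain ⟨p, rfl⟩ := h
  exact ⟨Polynomial.X * p, by simp, by simp⟩

lemma tYmm_eq_tYpp : tYmm = tYpp := by
  funext a b c
  cases a <;> cases b <;> cases c <;> rfl

lemma applyYmm_eq_applyYpp : applyYmm = applyYpp := by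
  funext k x L
  simp only [applyYmm, applyYpp, tYmm_eq_tYpp]

/-- A Y-rule is determined by its output state. -/
lemma YPat.inj {a b a' b' c : St} (h : YPat a b c) (h' : YPat a' b' c) : a = a' ∧ b = b' := by
  cases h <;> cases h' <;> exact ⟨rfl, rfl⟩

lemma applyYpp_append (x : List St → K) (P R : List St) (a b : St) :
    applyYpp P.length x (P ++ a :: b :: R) = ∑ c : St, tYpp a b c * x (P ++ c :: R) := by
  simp [applyYpp]

lemma sum_St (f : St → K) : ∑ c : St, f c = f .neg + f .zero + f .pos := by
  have h : (Finset.univ : Finset St) = {St.neg, St.zero, St.pos} := rfl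
  rw [h]
  simp [add_assoc]

/-- For each pair `(a, b)` at most one state `c` contributes to the coefficient, with factor `1`
(exactly when `YPat a b c`) or `v⁻¹`. -/
lemma applyYpp_cases (x : List St → K) (P R : List St) (a b : St)
    (hx : ∀ c, InZInv (x (P ++ c :: R))) :
    ZeroConst (applyYpp P.length x (P ++ a :: b :: R)) ∨
      ∃ c, YPat a b c ∧ applyYpp P.length x (P ++ a :: b :: R) = x (P ++ c :: R) := by
  rw [applyYpp_append, sum_St]
  cases a <;> cases b <;> simp only [tYpp, zero_mul, one_mul, add_zero, zero_add]
  case pos.zero => exact Or.inr ⟨_, .y1, rfl⟩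
  case pos.neg => exact Or.inr ⟨_, .y2, rfl⟩
  case zero.neg => exact Or.inr ⟨_, .y3, rfl⟩
  all_goals first
    | exact Or.inl zeroConst_zero
    | exact Or.inl (hx _).zeroConst_mul

lemma exists_split (k n : ℕ) (hk : k < n) (L : List St) (hL : L.length = n + 1) :
    ∃ P a b R, P.length = k ∧ P.length + R.length + 1 = n ∧ L = P ++ a :: b :: R := by
  refine ⟨L.take k, L[k], L[k + 1], L.drop (k + 2), ?_, ?_, ?_⟩
  · simp; omega
  · simp; omega
  · simp

lemma propP_applyYpp (n k : ℕ) (hk : k < n) (x : List St → K) (hx : PropP n x) :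
    PropP (n + 1) (applyYpp k x) := by
  obtain ⟨hint, huniq⟩ := hx
  refine ⟨fun L hL => ?_, fun L L' hL hL' h h' => ?_⟩
  · obtain ⟨P, a, b, R, rfl, hn, rfl⟩ := exists_split k n hk L hL
    have hlen : ∀ c, (P ++ c :: R).length = n := fun c => by simp; omega
    rcases applyYpp_cases x P R a b fun c => hint _ (hlen c) with hz | ⟨c, -, hc⟩
    · exact hz.inZInv
    · rw [hc]
      exact hint _ (hlen c)
  · obtain ⟨P, a, b, R, hP, hn, rfl⟩ := exists_split k n hk L hL
    obtain ⟨P', a', b', R', hP', hn', rfl⟩ := exists_split k n hk L' hL'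
    have hlen : ∀ c, (P ++ c :: R).length = n := fun c => by simp; omega
    have hlen' : ∀ c, (P' ++ c :: R').length = n := fun c => by simp; omega
    have key := applyYpp_cases x P R a b fun c => hint _ (hlen c)
    have key' := applyYpp_cases x P' R' a' b' fun c => hint _ (hlen' c)
    rw [hP] at key
    rw [hP'] at key'
    obtain ⟨c, hy, hc⟩ := key.resolve_left h
    obtain ⟨c', hy', hc'⟩ := key'.resolve_left h'
    rw [hc] at h
    rw [hc'] at h'
    obtain ⟨rfl, hcR⟩ := List.append_inj (huniq _ _ (hlen c) (hlen' c') h h') (hP.trans hP'.symm)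
    obtain ⟨rfl, rfl⟩ := List.cons.inj hcR
    obtain ⟨rfl, rfl⟩ := hy.inj hy'
    rfl

/-- property P is preserved by attaching a `Y` at a position
whose sign is `−` (via `t^{++}_-`) or `+` (via `t^{--}_+`). -/
theorem propP_attachY (S' : List Bool) (k : ℕ) (hk : k < S'.length)
    (x : List St → K) (hx : PropP S'.length x) :
    (S'.get ⟨k, hk⟩ = false → PropP (S'.length + 1) (applyYpp k x)) ∧
    (S'.get ⟨k, hk⟩ = true → PropP (S'.length + 1) (applyYmm k x)) := by
  have h := propP_applyYpp S'.length k hk x hx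
  exact ⟨fun _ => h, fun _ => applyYmm_eq_applyYpp ▸ h⟩

end
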